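/- Let α > 0, β ≥ 0, h > 0 and define F(a) = α/(2cos²(a/2)) + β/h² + 2tan²(a/2)·(β/h²)·(β/(αh²) + 1) for a ∈ (0, 2π), a ≠ π. Then (i) F(a) > α/2 + β/h² for every such a, and (ii) F(a) tends to α/2 + β/h² as a tends to 0 from the right. Hence the infimum of the critical curve over all modes equals α/2 + β/h², which yields the global stability threshold V'(h) = α/2 + β/h². -/

import Mathlib

open Real

/-- The critical curve `F(a) = α/(2 cos²(a/2)) + β/h² + 2 tan²(a/2) (β/h²)(β/(α h²) + 1)`
lies strictly above `α/2 + β/h²` for every mode `a ∈ (0, 2π)`, `a ≠ π`, and tends to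
`α/2 + β/h²` as `a → 0⁺`; hence the infimum of the critical curve over all modes equals
`α/2 + β/h²`, the global stability threshold. -/
theorem critical_curve_infimum
    (α β h : ℝ) (hα : 0 < α) (hβ : 0 ≤ β) (hh : 0 < h)
    (F : ℝ → ℝ)
    (hF : ∀ a : ℝ, F a = α / (2 * Real.cos (a / 2) ^ 2) + β / h ^ 2
        + 2 * Real.tan (a / 2) ^ 2 * (β / h ^ 2) * (β / (α * h ^ 2) + 1)) :
    (∀ a ∈ Set.Ioo (0 : ℝ) (2 * Real.pi), a ≠ Real.pi → α / 2 + β / h ^ 2 < F a) ∧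
      Filter.Tendsto F (nhdsWithin 0 (Set.Ioi 0)) (nhds (α / 2 + β / h ^ 2)) := by
  constructor
  · rintro a ⟨ha0, ha2⟩ hne
    have hsin : 0 < Real.sin (a / 2) := Real.sin_pos_of_pos_of_lt_pi (by linarith) (by linarith)
    have hcos : Real.cos (a / 2) ≠ 0 := by
      intro hc
      have hhalf : a / 2 = Real.pi / 2 :=
        Real.injOn_cos ⟨by linarith, by linarith⟩
          ⟨by linarith [Real.pi_pos], by linarith [Real.pi_pos]⟩ (by rw [hc, Real.cos_pi_div_two])
      exact hne (by linarith)
    have hcos_pos : 0 < Real.cos (a / 2) ^ 2 := by positivity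
    have hcos_lt : Real.cos (a / 2) ^ 2 < 1 := by
      nlinarith [Real.sin_sq_add_cos_sq (a / 2)]
    have hfirst : α / 2 < α / (2 * Real.cos (a / 2) ^ 2) :=
      div_lt_div_of_pos_left hα (by positivity) (by linarith)
    have hlast : 0 ≤ 2 * Real.tan (a / 2) ^ 2 * (β / h ^ 2) * (β / (α * h ^ 2) + 1) := by
      positivity
    rw [hF]
    linarith
  · have hF0 : F 0 = α / 2 + β / h ^ 2 := by simp [hF]
    have hcont : ContinuousAt F 0 := by
      have hcos : Real.cos ((0 : ℝ) / 2) ≠ 0 := by simp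
      have htan : ContinuousAt (fun a : ℝ => Real.tan (a / 2)) 0 :=
        ContinuousAt.comp (f := fun a : ℝ => a / 2) (Real.continuousAt_tan.2 hcos) (by fun_prop)
      rw [funext hF]
      have hden : ContinuousAt (fun a : ℝ => α / (2 * Real.cos (a / 2) ^ 2)) 0 :=
        ContinuousAt.div (by fun_prop) (by fun_prop) (by simp)
      fun_prop
    rw [← hF0]
    exact hcont.tendsto.mono_left nhdsWithin_le_nhds
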